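/- Let F = {f₁,…,f_k} be an IFS of similarities on ℝ^d satisfying the open set condition with factors c_i ∈ (0,1) and attractor K of positive diameter, equipped with its natural fractal structure. Then dim_B(K) = dim³(K) = dim⁴(K) = dim⁵(K) = dim⁶(K) = dim_H(K) = s, where s solves ∑_{i∈I} c_i^s = 1, and moreover H^s_H(K), H^s_3(K), H^s_4(K), H^s_5(K), H^s_6(K) ∈ (0, ∞). -/

import Mathlib

open Metric Set Filter Topology MeasureTheory ENNReal NNReal

noncomputable section

/-- A map is a similarity with factor `c` if it scales all distances exactly by `c`. -/
def IsSimilarity {X : Type*} [MetricSpace X] (f : X → X) (c : ℝ) : Prop :=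
  ∀ x y, dist (f x) (f y) = c * dist x y

/-- Composition `f_{ω₁} ∘ ⋯ ∘ f_{ω_n}` of the maps of an IFS along a word `ω`. -/
def wordComp {X : Type*} {k : ℕ} (f : Fin k → X → X) {n : ℕ} (ω : Fin n → Fin k) : X → X :=
  (List.ofFn fun i => f (ω i)).foldr (· ∘ ·) id

/-- Number of elements of level `Γ_n` of the natural fractal structure (counted with
multiplicity over words) that meet `K`. -/
def levelCount {X : Type*} [MetricSpace X] {k : ℕ} (f : Fin k → X → X) (K : Set X)
    (n : ℕ) : ℕ :=
  Set.ncard {ω : Fin n → Fin k | ((wordComp f ω '' K) ∩ K).Nonempty}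

/-- `δ(K, Γ_n)`: supremum of diameters of the elements of level `Γ_n` meeting `K`. -/
def deltaLevel {X : Type*} [MetricSpace X] {k : ℕ} (f : Fin k → X → X) (K : Set X)
    (n : ℕ) : ℝ :=
  sSup {d : ℝ | ∃ ω : Fin n → Fin k, ((wordComp f ω '' K) ∩ K).Nonempty ∧
    d = Metric.diam (wordComp f ω '' K)}

/-- `N_δ(K)`: the largest number of disjoint closed balls of radius `δ` with centres in `K`. -/
def packingNum {X : Type*} [MetricSpace X] (K : Set X) (δ : ℝ) : ℕ :=
  sSup {m : ℕ | ∃ t : Finset X, t.card = m ∧ ↑t ⊆ K ∧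
    (t : Set X).Pairwise fun x y => Disjoint (Metric.closedBall x δ) (Metric.closedBall y δ)}

/-- The pre-measure `H^s_{n,3}(K)`: infimum over whole levels `m ≥ n` of the sum of the
`s`-th powers of the diameters of all elements of that level (with multiplicity). -/
def H3pre {X : Type*} [MetricSpace X] {k : ℕ} (f : Fin k → X → X) (K : Set X)
    (s : ℝ) (n : ℕ) : ℝ≥0∞ :=
  ⨅ m : {m : ℕ // n ≤ m}, ∑ ω : Fin m.1 → Fin k,
    ENNReal.ofReal (Metric.diam (wordComp f ω '' K)) ^ s

/-- `H^s_3(K)`: the (monotone) limit of `H^s_{n,3}(K)` as `n → ∞`. -/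
def H3 {X : Type*} [MetricSpace X] {k : ℕ} (f : Fin k → X → X) (K : Set X) (s : ℝ) : ℝ≥0∞ :=
  ⨆ n : ℕ, H3pre f K s n

/-- `H^s_4(K)`: limit over `n` of the infimum over finite covers of `K` by elements of
levels `≥ n` of the natural fractal structure. -/
def H4 {X : Type*} [MetricSpace X] {k : ℕ} (f : Fin k → X → X) (K : Set X) (s : ℝ) : ℝ≥0∞ :=
  ⨆ n : ℕ, ⨅ (𝒜 : Set (Set X)) (_ : 𝒜.Finite ∧
      (∀ A ∈ 𝒜, ∃ m, n ≤ m ∧ ∃ ω : Fin m → Fin k, A = wordComp f ω '' K) ∧ K ⊆ ⋃₀ 𝒜),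
    ∑' A : 𝒜, ENNReal.ofReal (Metric.diam (A : Set X)) ^ s

/-- `H^s_5(K)`: limit over `n` of the infimum over countable covers of `K` by elements of
levels `≥ n` of the natural fractal structure. -/
def H5 {X : Type*} [MetricSpace X] {k : ℕ} (f : Fin k → X → X) (K : Set X) (s : ℝ) : ℝ≥0∞ :=
  ⨆ n : ℕ, ⨅ (𝒜 : Set (Set X)) (_ : 𝒜.Countable ∧
      (∀ A ∈ 𝒜, ∃ m, n ≤ m ∧ ∃ ω : Fin m → Fin k, A = wordComp f ω '' K) ∧ K ⊆ ⋃₀ 𝒜),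
    ∑' A : 𝒜, ENNReal.ofReal (Metric.diam (A : Set X)) ^ s

/-- `H^s_6(K)`: limit as `δ → 0` of the infimum over countable covers of `K` by
fractal-structure elements of diameter at most `δ`. -/
def H6 {X : Type*} [MetricSpace X] {k : ℕ} (f : Fin k → X → X) (K : Set X) (s : ℝ) : ℝ≥0∞ :=
  ⨆ (δ : ℝ) (_ : 0 < δ), ⨅ (𝒜 : Set (Set X)) (_ : 𝒜.Countable ∧
      (∀ A ∈ 𝒜, (∃ m, ∃ ω : Fin m → Fin k, A = wordComp f ω '' K) ∧ Metric.diam A ≤ δ) ∧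
      K ⊆ ⋃₀ 𝒜),
    ∑' A : 𝒜, ENNReal.ofReal (Metric.diam (A : Set X)) ^ s

/-- The open set condition for a family of self-maps of `ℝ^d`. -/
def OSC {d k : ℕ} (f : Fin k → EuclideanSpace ℝ (Fin d) → EuclideanSpace ℝ (Fin d)) : Prop :=
  ∃ V : Set (EuclideanSpace ℝ (Fin d)), V.Nonempty ∧ IsOpen V ∧ Bornology.IsBounded V ∧
    (∀ i, f i '' V ⊆ V) ∧ Pairwise fun i j => Disjoint (f i '' V) (f j '' V)

section Sim
variable {X : Type*} [MetricSpace X]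

theorem IsSimilarity.comp' {f g : X → X} {a b : ℝ} (hf : IsSimilarity f a) (hg : IsSimilarity g b) :
    IsSimilarity (f ∘ g) (a * b) := by
  intro x y
  simp only [Function.comp]
  rw [hf, hg, mul_assoc]

theorem isSimilarity_id : IsSimilarity (id : X → X) 1 := by
  intro x y; simp

theorem IsSimilarity.lip {f : X → X} {a : ℝ} (hf : IsSimilarity f a) (ha : 0 < a) :
    LipschitzWith a.toNNReal f := by
  apply LipschitzWith.of_dist_le_mul
  intro x y
  rw [hf, Real.coe_toNNReal _ ha.le]

theorem IsSimilarity.antilip {f : X → X} {a : ℝ} (hf : IsSimilarity f a) (ha : 0 < a) :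
    AntilipschitzWith (a⁻¹).toNNReal f := by
  apply AntilipschitzWith.of_le_mul_dist
  intro x y
  rw [hf, Real.coe_toNNReal _ (inv_pos.2 ha).le]
  rw [inv_mul_cancel_left₀ ha.ne']

theorem IsSimilarity.ediam_image {f : X → X} {a : ℝ} (hf : IsSimilarity f a) (ha : 0 < a)
    (S : Set X) : ediam (f '' S) = ENNReal.ofReal a * ediam S := by
  apply le_antisymm
  · exact (hf.lip ha).ediam_image_le S
  · have h := (hf.antilip ha).le_mul_ediam_image (S)
    calc ENNReal.ofReal a * ediam S ≤ ENNReal.ofReal a * (ENNReal.ofReal a⁻¹ * ediam (f '' S)) := by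
          gcongr; exact h
      _ = ediam (f '' S) := by
          rw [← mul_assoc, ← ENNReal.ofReal_mul ha.le, mul_inv_cancel₀ ha.ne']; simp

theorem IsSimilarity.diam_image {f : X → X} {a : ℝ} (hf : IsSimilarity f a) (ha : 0 < a)
    (S : Set X) : Metric.diam (f '' S) = a * Metric.diam S := by
  rw [Metric.diam, hf.ediam_image ha, ENNReal.toReal_mul, ENNReal.toReal_ofReal ha.le, Metric.diam]

theorem IsSimilarity.le_muH [MeasurableSpace X] [BorelSpace X] {f : X → X} {a : ℝ}
    (hf : IsSimilarity f a) (ha : 0 < a) {t : ℝ} (ht : 0 ≤ t)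
    (S : Set X) : ENNReal.ofReal (a ^ t) * μH[t] S ≤ μH[t] (f '' S) := by
  have h := (hf.antilip ha).le_hausdorffMeasure_image ht S
  calc ENNReal.ofReal (a ^ t) * μH[t] S
      ≤ ENNReal.ofReal (a ^ t) * ((ENNReal.ofReal a⁻¹) ^ t * μH[t] (f '' S)) := by
        gcongr; exact h
    _ = μH[t] (f '' S) := by
        rw [← mul_assoc, ENNReal.ofReal_rpow_of_pos (inv_pos.2 ha),
          ← ENNReal.ofReal_mul (by positivity),
          ← Real.mul_rpow ha.le (inv_pos.2 ha).le, mul_inv_cancel₀ ha.ne']; simp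

theorem wordComp_succ {k n : ℕ} (f : Fin k → X → X) (ω : Fin (n + 1) → Fin k) :
    wordComp f ω = f (ω 0) ∘ wordComp f (fun i => ω i.succ) := by
  simp [wordComp, List.ofFn_succ]

theorem wordComp_sim {k : ℕ} (f : Fin k → X → X) (c : Fin k → ℝ)
    (hf : ∀ i, IsSimilarity (f i) (c i)) : ∀ {n : ℕ} (ω : Fin n → Fin k),
    IsSimilarity (wordComp f ω) (∏ i, c (ω i))
  | 0, ω => by simpa [wordComp] using (isSimilarity_id : IsSimilarity (id : X → X) 1)
  | n + 1, ω => by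
      rw [wordComp_succ, Fin.prod_univ_succ]
      exact (hf _).comp' (wordComp_sim f c hf _)

theorem mem_level {k : ℕ} (f : Fin k → X → X) {K : Set X} (hK : K = ⋃ i, f i '' K) :
    ∀ (n : ℕ) (x : X), x ∈ K → ∃ ω : Fin n → Fin k, x ∈ wordComp f ω '' K
  | 0, x, hx => ⟨Fin.elim0, by simpa [wordComp] using hx⟩
  | n + 1, x, hx => by
      rw [hK] at hx
      obtain ⟨i, y, hy, rfl⟩ := mem_iUnion.1 hx
      obtain ⟨ω, z, hz, rfl⟩ := mem_level f hK n y hy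
      exact ⟨Fin.cons i ω, z, hz, by rw [wordComp_succ]; simp⟩

end Sim

/-- mass of level-`n` pieces of `g K` meeting `U`. -/
def massM {X : Type*} {k : ℕ} (f : Fin k → X → X) (c : Fin k → ℝ) (s : ℝ) (K U : Set X) :
    ℕ → (X → X) → ℝ → ℝ
  | 0, g, ρ => by classical exact if ((g '' K) ∩ U).Nonempty then ρ ^ s else 0
  | n + 1, g, ρ => ∑ i, massM f c s K U n (g ∘ f i) (ρ * c i)

section Mass
variable {X : Type*} {k : ℕ} {f : Fin k → X → X} {c : Fin k → ℝ} {s : ℝ} {K : Set X}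

theorem massM_nonneg (hc : ∀ i, 0 < c i) (U : Set X) : ∀ (n : ℕ) (g : X → X) (ρ : ℝ), 0 ≤ ρ →
    0 ≤ massM f c s K U n g ρ
  | 0, g, ρ, h => by
      rw [massM]; split_ifs <;> positivity
  | n + 1, g, ρ, h => by
      rw [massM]
      exact Finset.sum_nonneg fun i _ => massM_nonneg hc U n _ _ (mul_nonneg h (hc i).le)

theorem sum_rho (hc : ∀ i, 0 < c i) (hsum : ∑ i, c i ^ s = 1) {ρ : ℝ} (h : 0 ≤ ρ) :
    ∑ i, (ρ * c i) ^ s = ρ ^ s := by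
  simp_rw [Real.mul_rpow h (hc _).le]
  rw [← Finset.mul_sum, hsum, mul_one]

theorem massM_le (hc : ∀ i, 0 < c i) (hsum : ∑ i, c i ^ s = 1) (U : Set X) :
    ∀ (n : ℕ) (g : X → X) (ρ : ℝ), 0 ≤ ρ → massM f c s K U n g ρ ≤ ρ ^ s
  | 0, g, ρ, h => by
      rw [massM]; split_ifs
      · exact le_rfl
      · positivity
  | n + 1, g, ρ, h => by
      rw [massM, ← sum_rho hc hsum h]
      exact Finset.sum_le_sum fun i _ => massM_le hc hsum U n _ _ (mul_nonneg h (hc i).le)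

theorem massM_zero (hK : K = ⋃ i, f i '' K) (U : Set X) :
    ∀ (n : ℕ) (g : X → X) (ρ : ℝ), ¬ ((g '' K) ∩ U).Nonempty → massM f c s K U n g ρ = 0
  | 0, g, ρ, h => by
      rw [massM]; simp [h]
  | n + 1, g, ρ, h => by
      rw [massM]
      refine Finset.sum_eq_zero fun i _ => massM_zero hK U n _ _ ?_
      rintro ⟨x, ⟨y, hy, rfl⟩, hx⟩
      refine h ⟨_, ⟨f i y, ?_, rfl⟩, hx⟩
      rw [hK]; exact mem_iUnion.2 ⟨i, y, hy, rfl⟩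

theorem massM_cover (hc : ∀ i, 0 < c i) (hsum : ∑ i, c i ^ s = 1) (hK : K = ⋃ i, f i '' K)
    (hne : K.Nonempty) {ι : Type*} (J : Finset ι) (U : ι → Set X) :
    ∀ (n : ℕ) (g : X → X) (ρ : ℝ), 0 ≤ ρ → g '' K ⊆ ⋃ j ∈ J, U j →
      ρ ^ s ≤ ∑ j ∈ J, massM f c s K (U j) n g ρ
  | 0, g, ρ, h, hU => by
      obtain ⟨x, hx⟩ := hne
      obtain ⟨j, hj, hxj⟩ := mem_iUnion₂.1 (hU ⟨x, hx, rfl⟩)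
      refine le_trans ?_ (Finset.single_le_sum (fun j _ => massM_nonneg hc (U j) 0 g ρ h) hj)
      rw [massM, if_pos ⟨_, ⟨x, hx, rfl⟩, hxj⟩]
  | n + 1, g, ρ, h, hU => by
      simp only [massM]
      rw [Finset.sum_comm, ← sum_rho hc hsum h]
      refine Finset.sum_le_sum fun i _ =>
        massM_cover hc hsum hK hne J U n _ _ (mul_nonneg h (hc i).le) ?_
      rintro _ ⟨y, hy, rfl⟩
      refine hU ⟨f i y, ?_, rfl⟩
      rw [hK]; exact mem_iUnion.2 ⟨i, y, hy, rfl⟩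

end Mass

section Vol
variable {d k : ℕ}

local notation "E" => EuclideanSpace ℝ (Fin d)

theorem massM_vol {f : Fin k → E → E} {c : Fin k → ℝ} {s : ℝ} {K V : Set E}
    (hs : 0 ≤ s) {a b : ℝ} (ha : 0 < a) (hac : ∀ i, a ≤ c i) (hb : 0 ≤ b) (hcb : ∀ i, c i ≤ b)
    (hf : ∀ i, IsSimilarity (f i) (c i)) (hsum : ∑ i, c i ^ s = 1) (hK : K = ⋃ i, f i '' K)
    (hVo : IsOpen V) (hVb : Bornology.IsBounded V) (hVf : ∀ i, f i '' V ⊆ V)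
    (hVd : Pairwise fun i j => Disjoint (f i '' V) (f j '' V))
    {D : ℝ} (hD : ∀ x ∈ K, ∀ y ∈ V, dist y x ≤ D) (hD0 : 0 ≤ D) {x0 : E} {r : ℝ} (hr : 0 < r)
    (ν : Measure E) [IsFiniteMeasureOnCompacts ν]
    (hν : ∀ (g : E → E) (ρ : ℝ), 0 < ρ → IsSimilarity g ρ → ρ ^ d * ν.real V ≤ ν.real (g '' V)) :
    ∀ (n : ℕ) (g : E → E) (ρ : ℝ), IsSimilarity g ρ → a * r ≤ ρ → b ^ n * ρ ≤ r →
      (a * r) ^ d * ν.real V * massM f c s K (ball x0 r) n g ρ ≤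
        r ^ s * ν.real (g '' V ∩ closedBall x0 (r * (1 + D))) := by
  have hc : ∀ i, 0 < c i := fun i => ha.trans_le (hac i)
  have base : ∀ (n : ℕ) (g : E → E) (ρ : ℝ), IsSimilarity g ρ → a * r ≤ ρ → ρ ≤ r →
      (a * r) ^ d * ν.real V * massM f c s K (ball x0 r) n g ρ ≤
        r ^ s * ν.real (g '' V ∩ closedBall x0 (r * (1 + D))) := by
    intro n g ρ hg h1 h2
    have hρ : 0 < ρ := (mul_pos ha hr).trans_le h1
    by_cases hm : ((g '' K) ∩ ball x0 r).Nonempty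
    · obtain ⟨_, ⟨x, hx, rfl⟩, hxb⟩ := hm
      have hsub : g '' V ⊆ closedBall x0 (r * (1 + D)) := by
        rintro _ ⟨y, hy, rfl⟩
        rw [mem_closedBall]
        have h3 : dist (g y) (g x) ≤ r * D := by
          rw [hg]
          exact mul_le_mul h2 (hD x hx y hy) dist_nonneg hr.le
        have h4 : dist (g x) x0 ≤ r := (mem_ball.1 hxb).le
        linarith [dist_triangle (g y) (g x) x0]
      rw [inter_eq_left.2 hsub]
      have h5 := massM_le (f := f) (K := K) hc hsum (ball x0 r) n g ρ hρ.le
      have h6 : ρ ^ s ≤ r ^ s := Real.rpow_le_rpow hρ.le h2 hs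
      have h7 : (a * r) ^ d * ν.real V ≤ ν.real (g '' V) := by
        refine le_trans ?_ (hν g ρ hρ hg)
        gcongr
      calc _ ≤ ν.real (g '' V) * r ^ s := by
            apply mul_le_mul h7 (h5.trans h6) (massM_nonneg hc _ _ _ _ hρ.le) (by positivity)
        _ = _ := mul_comm _ _
    · rw [massM_zero hK _ _ _ _ hm]
      simp only [mul_zero]; positivity
  intro n
  induction n with
  | zero =>
    intro g ρ hg h1 h2
    exact base 0 g ρ hg h1 (by simpa using h2)
  | succ n ih =>
    intro g ρ hg h1 h2
    have hρ : 0 < ρ := (mul_pos ha hr).trans_le h1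
    rcases le_or_gt ρ r with h | h
    · exact base _ g ρ hg h1 h
    rw [massM, Finset.mul_sum]
    have hfin : ∀ S : Set E, ν (S ∩ closedBall x0 (r * (1 + D))) ≠ ⊤ := fun S =>
      ((measure_mono inter_subset_right).trans_lt
        (isCompact_closedBall x0 (r * (1 + D))).measure_lt_top).ne
    have step : ∑ i, ν.real ((g ∘ f i) '' V ∩ closedBall x0 (r * (1 + D))) ≤
        ν.real (g '' V ∩ closedBall x0 (r * (1 + D))) := by
      rw [← measureReal_iUnion_fintype (h' := fun i => hfin _)]
      · apply measureReal_mono _ (hfin _)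
        refine iUnion_subset fun i => inter_subset_inter_left _ ?_
        rw [image_comp]
        exact image_mono (hVf i)
      · intro i j hij
        refine Disjoint.mono inter_subset_left inter_subset_left ?_
        rw [image_comp, image_comp]
        exact (disjoint_image_iff (hg.antilip hρ).injective).2 (hVd hij)
      · intro i
        refine MeasurableSet.inter ?_ isClosed_closedBall.measurableSet
        have hgi := hg.comp' (hf i)
        have hp := mul_pos hρ (hc i)
        exact hVo.measurableSet.image_of_continuousOn_injOn (hgi.lip hp).continuous.continuousOn
          (hgi.antilip hp).injective.injOn
    calc _ ≤ ∑ i, r ^ s * ν.real ((g ∘ f i) '' V ∩ closedBall x0 (r * (1 + D))) := by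
          refine Finset.sum_le_sum fun i _ => ih _ _ (hg.comp' (hf i)) ?_ ?_
          · rw [mul_comm ρ]
            exact mul_le_mul (hac i) h.le hr.le (hc i).le
          · refine le_trans ?_ h2
            rw [pow_succ, mul_assoc, mul_comm ρ]
            have := hcb i
            gcongr
      _ ≤ _ := by
          rw [← Finset.mul_sum]
          gcongr

/-- Mass distribution estimate: any finite cover of `K` by small balls has large `s`-sum. -/
theorem mass_dist {f : Fin k → E → E} {c : Fin k → ℝ} {s : ℝ} {K : Set E}
    (hs : 0 ≤ s) {a b : ℝ} (ha : 0 < a) (hac : ∀ i, a ≤ c i) (hb : 0 ≤ b) (hb1 : b < 1)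
    (ha1 : a < 1) (hcb : ∀ i, c i ≤ b)
    (hf : ∀ i, IsSimilarity (f i) (c i)) (hsum : ∑ i, c i ^ s = 1) (hK : K = ⋃ i, f i '' K)
    (hne : K.Nonempty) (hcpt : IsCompact K) (hosc : OSC f) :
    ∃ C : ℝ, 0 < C ∧ ∀ {ι : Type} (J : Finset ι) (x : ι → E) (r : ι → ℝ),
      (∀ j ∈ J, 0 < r j ∧ r j ≤ 1) → K ⊆ ⋃ j ∈ J, ball (x j) (r j) →
      1 ≤ C * ∑ j ∈ J, r j ^ s := by
  obtain ⟨V, hVne, hVo, hVb, hVf, hVd⟩ := hosc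
  have hc : ∀ i, 0 < c i := fun i => ha.trans_le (hac i)
  obtain ⟨D, hD0, hD⟩ : ∃ D : ℝ, 0 ≤ D ∧ ∀ x ∈ K, ∀ y ∈ V, dist y x ≤ D := by
    refine ⟨Metric.diam (V ∪ K), Metric.diam_nonneg, fun x hx y hy => ?_⟩
    exact Metric.dist_le_diam_of_mem (hVb.union hcpt.isBounded) (Or.inl hy) (Or.inr hx)
  have hfr : Module.finrank ℝ E = d := by simp
  let ν : Measure E := μH[(Module.finrank ℝ E : ℝ)]
  have hνE : ν = μH[(d : ℝ)] := by simp only [ν, hfr]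
  haveI : ν.IsAddHaarMeasure := isAddHaarMeasure_hausdorffMeasure
  have hVfin : ∀ g : E → E, ∀ ρ, 0 < ρ → IsSimilarity g ρ → ν (g '' V) ≠ ⊤ := fun g ρ hρ hg =>
    ((hg.lip hρ).isBounded_image hVb).measure_lt_top.ne
  have hVpos : 0 < ν.real V := by
    rw [measureReal_def]
    exact ENNReal.toReal_pos (hVo.measure_pos ν hVne).ne' hVb.measure_lt_top.ne
  have hν : ∀ (g : E → E) (ρ : ℝ), 0 < ρ → IsSimilarity g ρ →
      ρ ^ d * ν.real V ≤ ν.real (g '' V) := by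
    intro g ρ hρ hg
    have h := hg.le_muH hρ (Nat.cast_nonneg d) V
    rw [← hνE, Real.rpow_natCast] at h
    have h2 := ENNReal.toReal_mono (hVfin g ρ hρ hg) h
    rwa [ENNReal.toReal_mul, ENNReal.toReal_ofReal (by positivity)] at h2
  let β := ν.real (closedBall (0 : E) 1)
  have hβ : 0 < β := by
    simp only [β]
    rw [measureReal_def]
    exact ENNReal.toReal_pos (measure_closedBall_pos ν _ one_pos).ne'
      (isCompact_closedBall _ _).measure_lt_top.ne
  refine ⟨(1 + D) ^ d * β / (a ^ d * ν.real V), by positivity, ?_⟩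
  intro ι J x r hr hcov
  obtain ⟨n, hn⟩ : ∃ n : ℕ, ∀ j ∈ J, b ^ n ≤ r j := by
    have h0 : Tendsto (fun n : ℕ => b ^ n) atTop (𝓝 0) := tendsto_pow_atTop_nhds_zero_of_lt_one hb hb1
    have : ∀ᶠ n : ℕ in atTop, ∀ j ∈ J, b ^ n ≤ r j := by
      rw [Filter.eventually_all_finset]
      intro j hj
      filter_upwards [h0.eventually (gt_mem_nhds (hr j hj).1)] with n hn using hn.le
    exact this.exists
  have h1 := massM_cover (f := f) hc hsum hK hne J (fun j => ball (x j) (r j)) n id 1 zero_le_one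
    (by simpa using hcov)
  rw [Real.one_rpow] at h1
  refine h1.trans ?_
  rw [Finset.mul_sum]
  refine Finset.sum_le_sum fun j hj => ?_
  obtain ⟨hr0, hr1⟩ := hr j hj
  have h2 := massM_vol hs ha hac hb hcb hf hsum hK hVo hVb hVf hVd hD hD0 (x0 := x j) hr0 ν hν
    n id 1 isSimilarity_id (by nlinarith) (by simpa using hn j hj)
  have h3 : ν.real (id '' V ∩ closedBall (x j) (r j * (1 + D))) ≤ (r j * (1 + D)) ^ d * β := by
    refine (measureReal_mono inter_subset_right
      (isCompact_closedBall _ _).measure_lt_top.ne).trans ?_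
    rw [Measure.addHaar_real_closedBall' ν _ (by positivity), hfr]
  have h4 := h2.trans (mul_le_mul_of_nonneg_left h3 (by positivity))
  rw [div_mul_eq_mul_div, le_div_iff₀ (by positivity)]
  rw [mul_pow, mul_pow] at h4
  have h5 : 0 < r j ^ d := by positivity
  refine le_of_mul_le_mul_left ?_ h5
  linarith

end Vol

section Haus
variable {d k : ℕ}

theorem muH_pos_of_mass {X : Type} [MetricSpace X] [MeasurableSpace X] [BorelSpace X] {K : Set X}
    (hne : K.Nonempty) (hcpt : IsCompact K)
    {s : ℝ} (hs : 0 < s) {C : ℝ} (hC : 0 < C)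
    (h : ∀ {ι : Type} (J : Finset ι) (x : ι → X) (r : ι → ℝ),
      (∀ j ∈ J, 0 < r j ∧ r j ≤ 1) → K ⊆ ⋃ j ∈ J, ball (x j) (r j) →
      1 ≤ C * ∑ j ∈ J, r j ^ s) : 0 < μH[s] K := by
  obtain ⟨p, hp⟩ := hne
  suffices hh : ENNReal.ofReal C⁻¹ ≤ μH[s] K from
    lt_of_lt_of_le (ENNReal.ofReal_pos.2 (inv_pos.2 hC)) hh
  rw [Measure.hausdorffMeasure_apply]
  refine le_iSup₂_of_le (ENNReal.ofReal (1/2)) (by simp) ?_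
  refine le_iInf fun t => le_iInf fun ht => le_iInf fun hd => ?_
  refine ENNReal.le_of_forall_pos_le_add fun ε hε _ => ?_
  obtain ⟨η, hη0, hη⟩ := ENNReal.exists_pos_sum_of_countable (ε := (ε : ℝ≥0∞)) (by simpa using hε.ne') ℕ
  have key : ∀ n, ∃ x : X, ∃ r : ℝ, 0 < r ∧ r ≤ 1 ∧ t n ⊆ ball x r ∧
      ENNReal.ofReal (r ^ s) ≤ (⨆ _ : (t n).Nonempty, ediam (t n) ^ s) + η n := by
    intro n
    -- real radius `D` with a continuity argument
    have cont : ∀ D : ℝ, 0 ≤ D → D ≤ 1/2 → ∃ r, D < r ∧ r ≤ 1 ∧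
        ENNReal.ofReal (r ^ s) ≤ ENNReal.ofReal (D ^ s) + η n := by
      intro D hD0 hD
      have hcont : ContinuousAt (fun r : ℝ => r ^ s) D :=
        (Real.continuous_rpow_const hs.le).continuousAt
      have h1 : ∀ᶠ r in 𝓝 D, r ^ s < D ^ s + η n :=
        hcont.eventually (gt_mem_nhds (by have := hη0 n; simpa using this))
      have h2 : ∀ᶠ r in 𝓝 D, r < 1 := gt_mem_nhds (by linarith)
      have h3 : ∀ᶠ r in 𝓝[>] D, (r ^ s < D ^ s + η n ∧ r < 1) ∧ D < r :=
        ((h1.and h2).filter_mono nhdsWithin_le_nhds).and self_mem_nhdsWithin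
      obtain ⟨r, ⟨hr1, hr2⟩, hr3⟩ := h3.exists
      refine ⟨r, hr3, hr2.le, ?_⟩
      calc ENNReal.ofReal (r ^ s) ≤ ENNReal.ofReal (D ^ s + η n) := ENNReal.ofReal_le_ofReal hr1.le
        _ = ENNReal.ofReal (D ^ s) + η n := by
          rw [ENNReal.ofReal_add (by positivity) (by positivity)]; simp
    rcases (t n).eq_empty_or_nonempty with he | hne
    · obtain ⟨r, h1, h2, h3⟩ := cont 0 le_rfl (by norm_num)
      refine ⟨p, r, h1, h2, by simp [he], ?_⟩
      rw [Real.zero_rpow hs.ne'] at h3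
      simpa [he] using h3
    · have hfin : ediam (t n) ≠ ⊤ := ((hd n).trans_lt ENNReal.ofReal_lt_top).ne
      have hD : (ediam (t n)).toReal ≤ 1/2 := by
        have := ENNReal.toReal_mono ENNReal.ofReal_ne_top (hd n)
        rwa [ENNReal.toReal_ofReal (by norm_num)] at this
      obtain ⟨r, h1, h2, h3⟩ := cont _ ENNReal.toReal_nonneg hD
      obtain ⟨x, hx⟩ := hne
      refine ⟨x, r, ENNReal.toReal_nonneg.trans_lt h1, h2, ?_, ?_⟩
      · intro y hy
        rw [mem_ball]
        exact (Metric.dist_le_diam_of_mem' hfin hy hx).trans_lt h1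
      · rw [← ENNReal.ofReal_rpow_of_nonneg ENNReal.toReal_nonneg hs.le,
          ENNReal.ofReal_toReal hfin] at h3
        have hne : (t n).Nonempty := ⟨x, hx⟩
        simpa [hne] using h3
  choose x r hr0 hr1 htb hle using key
  obtain ⟨J, hJ⟩ := hcpt.elim_finite_subcover (fun n => ball (x n) (r n)) (fun n => isOpen_ball)
    (ht.trans (iUnion_mono htb))
  have h1 := h J x r (fun j _ => ⟨hr0 j, hr1 j⟩) hJ
  have h2 : C⁻¹ ≤ ∑ j ∈ J, r j ^ s := by
    rw [inv_le_iff_one_le_mul₀ hC, mul_comm]; exact h1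
  calc ENNReal.ofReal C⁻¹ ≤ ENNReal.ofReal (∑ j ∈ J, r j ^ s) := ENNReal.ofReal_le_ofReal h2
    _ = ∑ j ∈ J, ENNReal.ofReal (r j ^ s) :=
        ENNReal.ofReal_sum_of_nonneg fun j _ => Real.rpow_nonneg (hr0 j).le _
    _ ≤ ∑ j ∈ J, ((⨆ _ : (t j).Nonempty, ediam (t j) ^ s) + η j) :=
        Finset.sum_le_sum fun j _ => hle j
    _ ≤ ∑' j, ((⨆ _ : (t j).Nonempty, ediam (t j) ^ s) + η j) := ENNReal.sum_le_tsum J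
    _ = (∑' j, ⨆ _ : (t j).Nonempty, ediam (t j) ^ s) + ∑' j, (η j : ℝ≥0∞) := ENNReal.tsum_add
    _ ≤ _ := by gcongr

variable {X : Type} [MetricSpace X] [MeasurableSpace X] [BorelSpace X]
  {f : Fin k → X → X} {c : Fin k → ℝ} {K : Set X}

theorem prod_pos' (hc : ∀ i, 0 < c i) {m : ℕ} (ω : Fin m → Fin k) : 0 < ∏ i, c (ω i) :=
  Finset.prod_pos fun i _ => hc _

theorem muH_le_H6 (hc : ∀ i, 0 < c i) (hf : ∀ i, IsSimilarity (f i) (c i)) (hcpt : IsCompact K)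
    (t : ℝ) : μH[t] K ≤ H6 f K t := by
  rw [Measure.hausdorffMeasure_apply]
  refine iSup₂_le fun r hr => ?_
  obtain ⟨δ, hδ, hδr⟩ : ∃ δ : ℝ, 0 < δ ∧ ENNReal.ofReal δ ≤ r := by
    rcases eq_or_ne r ⊤ with rfl | hr'
    · exact ⟨1, one_pos, le_top⟩
    · exact ⟨r.toReal, ENNReal.toReal_pos hr.ne' hr', ENNReal.ofReal_toReal_le⟩
  refine le_iSup₂_of_le δ hδ ?_
  refine le_iInf₂ fun 𝒜 h𝒜 => ?_
  obtain ⟨hcount, hA, hcov⟩ := h𝒜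
  have hed : ∀ A ∈ 𝒜, ediam A = ENNReal.ofReal (Metric.diam A) := by
    intro A hA'
    obtain ⟨⟨m, ω, rfl⟩, -⟩ := hA A hA'
    have hb := ((wordComp_sim f c hf ω).lip (prod_pos' hc ω)).isBounded_image hcpt.isBounded
    rw [Metric.diam, ENNReal.ofReal_toReal hb.ediam_ne_top]
  haveI := hcount.toEncodable
  refine iInf_le_of_le (fun n => ⋃ b ∈ Encodable.decode₂ 𝒜 n, (b : Set X)) ?_
  refine iInf_le_of_le ?_ ?_
  · rw [Encodable.iUnion_decode₂ (fun b : 𝒜 => (b : Set X)), ← sUnion_eq_iUnion]; exact hcov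
  refine iInf_le_of_le ?_ ?_
  · intro n
    refine Encodable.iUnion_decode₂_cases (C := fun S => ediam S ≤ r) (by simp) ?_
    intro b
    rw [hed b b.2]
    exact (ENNReal.ofReal_le_ofReal (hA b b.2).2).trans hδr
  · rw [tsum_iUnion_decode₂ (fun S : Set X => ⨆ _ : S.Nonempty, ediam S ^ t) (by simp)]
    refine ENNReal.tsum_le_tsum fun b => iSup_le fun _ => ?_
    rw [hed b b.2]

theorem H6_le_H5 {b : ℝ} (hb : 0 ≤ b) (hb1 : b < 1) (hcb : ∀ i, c i ≤ b)
    (hc : ∀ i, 0 < c i) (hf : ∀ i, IsSimilarity (f i) (c i))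
    (t : ℝ) : H6 f K t ≤ H5 f K t := by
  refine iSup₂_le fun δ hδ => ?_
  have h0 : Tendsto (fun n : ℕ => b ^ n * Metric.diam K) atTop (𝓝 0) := by
    simpa using (tendsto_pow_atTop_nhds_zero_of_lt_one hb hb1).mul_const (Metric.diam K)
  obtain ⟨n, hn⟩ := (h0.eventually (gt_mem_nhds hδ)).exists
  refine le_iSup_of_le n ?_
  refine le_iInf₂ fun 𝒜 h𝒜 => ?_
  refine iInf₂_le_of_le 𝒜 ⟨h𝒜.1, ?_, h𝒜.2.2⟩ le_rfl
  intro A hA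
  obtain ⟨m, hm, ω, rfl⟩ := h𝒜.2.1 A hA
  refine ⟨⟨m, ω, rfl⟩, ?_⟩
  rw [(wordComp_sim f c hf ω).diam_image (prod_pos' hc ω)]
  refine le_trans ?_ hn.le
  refine mul_le_mul_of_nonneg_right ?_ Metric.diam_nonneg
  calc ∏ i, c (ω i) ≤ ∏ _i : Fin m, b := Finset.prod_le_prod (fun i _ => (hc _).le) fun i _ => hcb _
    _ = b ^ m := by simp
    _ ≤ b ^ n := pow_le_pow_of_le_one hb hb1.le hm

theorem H5_le_H4 (t : ℝ) : H5 f K t ≤ H4 f K t := by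
  refine iSup_mono fun n => le_iInf₂ fun 𝒜 h𝒜 => ?_
  exact iInf₂_le_of_le 𝒜 ⟨h𝒜.1.countable, h𝒜.2⟩ le_rfl

theorem H4_le_H3 (hK : K = ⋃ i, f i '' K) (t : ℝ) : H4 f K t ≤ H3 f K t := by
  refine iSup_mono fun n => le_iInf fun m => ?_
  refine iInf₂_le_of_le (range fun ω : Fin m.1 → Fin k => wordComp f ω '' K) ⟨?_, ?_, ?_⟩ ?_
  · exact finite_range _
  · rintro _ ⟨ω, rfl⟩
    exact ⟨m.1, m.2, ω, rfl⟩
  · intro x hx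
    obtain ⟨ω, hω⟩ := mem_level f hK m.1 x hx
    exact mem_sUnion.2 ⟨_, ⟨ω, rfl⟩, hω⟩
  · rw [← tsum_fintype (L := SummationFilter.unconditional _)]
    have hsurj := rangeFactorization_surjective
      (f := fun ω : Fin m.1 → Fin k => wordComp f ω '' K)
    exact ENNReal.tsum_le_tsum_comp_of_surjective hsurj
      (fun A => ENNReal.ofReal (Metric.diam (A : Set X)) ^ t)

theorem level_sum (hc : ∀ i, 0 < c i) (hf : ∀ i, IsSimilarity (f i) (c i))
    (hdiam : 0 < Metric.diam K) (t : ℝ) (m : ℕ) :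
    ∑ ω : Fin m → Fin k, ENNReal.ofReal (Metric.diam (wordComp f ω '' K)) ^ t
      = ENNReal.ofReal ((∑ i, c i ^ t) ^ m * Metric.diam K ^ t) := by
  have : ∀ ω : Fin m → Fin k, ENNReal.ofReal (Metric.diam (wordComp f ω '' K)) ^ t
      = ENNReal.ofReal ((∏ i, c (ω i) ^ t) * Metric.diam K ^ t) := by
    intro ω
    have hp := prod_pos' hc ω
    rw [(wordComp_sim f c hf ω).diam_image hp, ENNReal.ofReal_rpow_of_pos (by positivity),
      Real.mul_rpow hp.le hdiam.le, Real.finsetProd_rpow _ _ fun i _ => (hc _).le]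
  simp_rw [this]
  rw [← ENNReal.ofReal_sum_of_nonneg, ← Finset.sum_mul, Fintype.sum_pow]
  intro ω _
  exact mul_nonneg (Finset.prod_nonneg fun i _ => Real.rpow_nonneg (hc _).le _)
    (Real.rpow_nonneg hdiam.le _)

theorem H3_lt_top (hc : ∀ i, 0 < c i) (hf : ∀ i, IsSimilarity (f i) (c i))
    (hdiam : 0 < Metric.diam K) {s : ℝ} (hsum : ∑ i, c i ^ s = 1) : H3 f K s < ⊤ := by
  refine lt_of_le_of_lt ?_ (ENNReal.ofReal_lt_top (r := Metric.diam K ^ s))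
  refine iSup_le fun n => iInf_le_of_le ⟨n, le_rfl⟩ ?_
  rw [level_sum hc hf hdiam, hsum]; simp

theorem H3_eq_zero (hc : ∀ i, 0 < c i) (hc1 : ∀ i, c i < 1) (hf : ∀ i, IsSimilarity (f i) (c i))
    (hdiam : 0 < Metric.diam K) {s t : ℝ} (hsum : ∑ i, c i ^ s = 1) (hst : s < t) :
    H3 f K t = 0 := by
  have hlt : ∑ i, c i ^ t < 1 := by
    rw [← hsum]
    apply Finset.sum_lt_sum_of_nonempty
    · by_contra h
      rw [Finset.not_nonempty_iff_eq_empty] at h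
      simp [h] at hsum
    · intro i _
      exact Real.rpow_lt_rpow_of_exponent_gt (hc i) (hc1 i) hst
  have h0 : 0 ≤ ∑ i, c i ^ t := Finset.sum_nonneg fun i _ => Real.rpow_nonneg (hc i).le _
  have hT : Tendsto (fun m : ℕ => ENNReal.ofReal ((∑ i, c i ^ t) ^ m * Metric.diam K ^ t))
      atTop (𝓝 0) := by
    have := (tendsto_pow_atTop_nhds_zero_of_lt_one h0 hlt).mul_const (Metric.diam K ^ t)
    rw [zero_mul] at this
    simpa using ENNReal.tendsto_ofReal this
  rw [← nonpos_iff_eq_zero]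
  refine iSup_le fun n => ?_
  refine ge_of_tendsto hT ?_
  filter_upwards [eventually_ge_atTop n] with m hm
  refine iInf_le_of_le ⟨m, hm⟩ ?_
  rw [level_sum hc hf hdiam]

end Haus

section Pack

theorem zoom {X : Type} [MetricSpace X] {k : ℕ} {f : Fin k → X → X} {c : Fin k → ℝ} {K : Set X}
    {a b : ℝ} (ha : 0 < a) (hac : ∀ i, a ≤ c i) (hb : 0 ≤ b) (hcb : ∀ i, c i ≤ b)
    (hf : ∀ i, IsSimilarity (f i) (c i)) (hK : K = ⋃ i, f i '' K) {ε : ℝ} (hε : 0 < ε) (x : X) :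
    ∀ (n : ℕ) (g : X → X) (ρ : ℝ), IsSimilarity g ρ → x ∈ g '' K → g '' K ⊆ K → b ^ n * ρ ≤ ε →
      a * ε ≤ ρ → ∃ (g' : X → X) (ρ' : ℝ), IsSimilarity g' ρ' ∧ x ∈ g' '' K ∧ g' '' K ⊆ K ∧
        a * ε ≤ ρ' ∧ ρ' ≤ ε := by
  intro n
  induction n with
  | zero =>
    intro g ρ hg hx hgK h1 h2
    exact ⟨g, ρ, hg, hx, hgK, h2, by simpa using h1⟩
  | succ n ih =>
    intro g ρ hg hx hgK h1 h2
    have hρ : 0 < ρ := (mul_pos ha hε).trans_le h2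
    rcases le_or_gt ρ ε with h | h
    · exact ⟨g, ρ, hg, hx, hgK, h2, h⟩
    obtain ⟨y, hy, rfl⟩ := hx
    have hy' := hy
    rw [hK] at hy'
    obtain ⟨i, z, hz, rfl⟩ := mem_iUnion.1 hy'
    refine ih (g ∘ f i) (ρ * c i) (hg.comp' (hf i)) ⟨z, hz, rfl⟩ ?_ ?_ ?_
    · refine Subset.trans ?_ hgK
      rw [image_comp]
      refine image_mono ?_
      intro w hw
      rw [hK]; exact mem_iUnion.2 ⟨i, hw⟩
    · refine le_trans ?_ h1
      rw [pow_succ, mul_assoc, mul_comm ρ]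
      have := hcb i
      gcongr
    · rw [mul_comm ρ]
      exact mul_le_mul (hac i) h.le hε.le (ha.le.trans (hac i))

theorem pack_upper {X : Type} [MetricSpace X] [MeasurableSpace X] [BorelSpace X]
    {k : ℕ} {f : Fin k → X → X} {c : Fin k → ℝ} {K : Set X}
    {a b : ℝ} (ha : 0 < a) (ha1 : a < 1) (hac : ∀ i, a ≤ c i) (hb : 0 ≤ b) (hb1 : b < 1)
    (hcb : ∀ i, c i ≤ b)
    (hf : ∀ i, IsSimilarity (f i) (c i)) (hK : K = ⋃ i, f i '' K) (hcpt : IsCompact K)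
    (hdiam : 0 < Metric.diam K) {s : ℝ} (hs : 0 < s) (h0 : 0 < μH[s] K) (h1 : μH[s] K < ⊤)
    {δ : ℝ} (hδ : 0 < δ) (hδ1 : δ ≤ Metric.diam K) (t : Finset X) (ht : ↑t ⊆ K)
    (hd : (t : Set X).Pairwise fun x y =>
      Disjoint (Metric.closedBall x δ) (Metric.closedBall y δ)) :
    (t.card : ℝ) ≤ (Metric.diam K / a) ^ s * δ ^ (-s) := by
  set ε := δ / Metric.diam K with hεdef
  have hε : 0 < ε := by positivity
  have hε1 : ε ≤ 1 := (div_le_one hdiam).2 hδ1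
  have hM : 0 < (μH[s] K).toReal := ENNReal.toReal_pos h0.ne' h1.ne
  have hfin : ∀ S, μH[s] (K ∩ S) ≠ ⊤ := fun S => ((measure_mono inter_subset_left).trans_lt h1).ne
  have hball : ∀ x ∈ t, (a * ε) ^ s * (μH[s] K).toReal ≤
      (μH[s] : Measure X).real (K ∩ closedBall x δ) := by
    intro x hx
    obtain ⟨n, hn⟩ : ∃ n : ℕ, b ^ n < ε :=
      ((tendsto_pow_atTop_nhds_zero_of_lt_one hb hb1).eventually (gt_mem_nhds hε)).exists
    obtain ⟨g, ρ, hg, ⟨y, hy, rfl⟩, hgK, hρ1, hρ2⟩ := zoom ha hac hb hcb hf hK hε x n id 1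
      isSimilarity_id (by simpa using ht hx) (by simp) (by simpa using hn.le) (by nlinarith)
    have hρ : 0 < ρ := (mul_pos ha hε).trans_le hρ1
    have hsub : g '' K ⊆ K ∩ closedBall (g y) δ := by
      refine subset_inter hgK ?_
      rintro _ ⟨z, hz, rfl⟩
      rw [mem_closedBall, hg]
      calc ρ * dist z y ≤ ε * Metric.diam K :=
            mul_le_mul hρ2 (Metric.dist_le_diam_of_mem hcpt.isBounded hz hy) dist_nonneg hε.le
        _ = δ := div_mul_cancel₀ _ hdiam.ne'
    have h3 := (hg.le_muH hρ hs.le K).trans (measure_mono hsub)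
    have h4 := ENNReal.toReal_mono (hfin _) h3
    rw [ENNReal.toReal_mul, ENNReal.toReal_ofReal (by positivity)] at h4
    refine le_trans ?_ h4
    gcongr
  have hsum : (t.card : ℝ) * ((a * ε) ^ s * (μH[s] K).toReal) ≤ (μH[s] K).toReal := by
    calc (t.card : ℝ) * ((a * ε) ^ s * (μH[s] K).toReal)
        = ∑ x ∈ t, (a * ε) ^ s * (μH[s] K).toReal := by simp
      _ ≤ ∑ x ∈ t, (μH[s] : Measure X).real (K ∩ closedBall x δ) := Finset.sum_le_sum hball
      _ = (μH[s] : Measure X).real (⋃ x ∈ t, K ∩ closedBall x δ) := by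
          rw [measureReal_biUnion_finset _ _ (fun x _ => hfin _)]
          · intro x hx y hy hxy
            exact (hd hx hy hxy).mono inter_subset_right inter_subset_right
          · intro x _
            exact hcpt.isClosed.measurableSet.inter isClosed_closedBall.measurableSet
      _ ≤ (μH[s] K).toReal := ENNReal.toReal_mono h1.ne
            (measure_mono (iUnion₂_subset fun x _ => inter_subset_left))
  have h5 : (t.card : ℝ) * (a * ε) ^ s ≤ 1 := by
    refine le_of_mul_le_mul_right ?_ hM
    linarith
  have h6 : (a * ε) ^ s * ((Metric.diam K / a) ^ s * δ ^ (-s)) = 1 := by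
    rw [Real.rpow_neg hδ.le, ← Real.inv_rpow hδ.le, ← Real.mul_rpow (by positivity) (by positivity),
      ← Real.mul_rpow (by positivity) (by positivity), hεdef]
    have : a * (δ / Metric.diam K) * (Metric.diam K / a * δ⁻¹) = 1 := by field_simp
    rw [this, Real.one_rpow]
  have h7 : 0 < (a * ε) ^ s := by positivity
  refine le_of_mul_le_mul_left ?_ h7
  rw [h6]; linarith

theorem box_dim {d k : ℕ} {f : Fin k → EuclideanSpace ℝ (Fin d) → EuclideanSpace ℝ (Fin d)}
    {c : Fin k → ℝ} {K : Set (EuclideanSpace ℝ (Fin d))}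
    {a b : ℝ} (ha : 0 < a) (ha1 : a < 1) (hac : ∀ i, a ≤ c i) (hb : 0 ≤ b) (hb1 : b < 1)
    (hcb : ∀ i, c i ≤ b)
    (hf : ∀ i, IsSimilarity (f i) (c i)) (hK : K = ⋃ i, f i '' K) (hcpt : IsCompact K)
    (hdiam : 0 < Metric.diam K) {s : ℝ} (hs : 0 < s) (h0 : 0 < μH[s] K) (h1 : μH[s] K < ⊤)
    {C : ℝ} (hC : 0 < C)
    (h : ∀ {ι : Type} (J : Finset ι) (x : ι → EuclideanSpace ℝ (Fin d)) (r : ι → ℝ),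
      (∀ j ∈ J, 0 < r j ∧ r j ≤ 1) → K ⊆ ⋃ j ∈ J, ball (x j) (r j) →
      1 ≤ C * ∑ j ∈ J, r j ^ s) :
    Filter.Tendsto (fun δ : ℝ => Real.log (packingNum K δ) / (-Real.log δ))
        (𝓝[>] (0 : ℝ)) (𝓝 s) := by
  classical
  set C2 := (Metric.diam K / a) ^ s with hC2
  have hC2p : 0 < C2 := by positivity
  set C1 := (C * 3 ^ s)⁻¹ with hC1
  have hC1p : 0 < C1 := by positivity
  have hbound : ∀ᶠ δ in 𝓝[>] (0 : ℝ), 0 < δ ∧ δ < 1 ∧ C1 * δ ^ (-s) ≤ packingNum K δ ∧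
      (packingNum K δ : ℝ) ≤ C2 * δ ^ (-s) := by
    have e1 : ∀ᶠ δ in 𝓝[>] (0 : ℝ), δ < 1 / 3 :=
      Filter.Eventually.filter_mono nhdsWithin_le_nhds (gt_mem_nhds (by norm_num))
    have e2 : ∀ᶠ δ in 𝓝[>] (0 : ℝ), δ < Metric.diam K :=
      Filter.Eventually.filter_mono nhdsWithin_le_nhds (gt_mem_nhds hdiam)
    filter_upwards [e1, e2, self_mem_nhdsWithin] with δ hδ1 hδ2 hδ0
    have hδ0 : 0 < δ := hδ0
    let S : Set ℕ := {m : ℕ | ∃ t : Finset (EuclideanSpace ℝ (Fin d)), t.card = m ∧ ↑t ⊆ K ∧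
      (t : Set (EuclideanSpace ℝ (Fin d))).Pairwise fun x y =>
        Disjoint (Metric.closedBall x δ) (Metric.closedBall y δ)}
    have hub : ∀ m ∈ S, (m : ℝ) ≤ C2 * δ ^ (-s) := by
      rintro m ⟨t, rfl, ht, hd⟩
      exact pack_upper ha ha1 hac hb hb1 hcb hf hK hcpt hdiam hs h0 h1 hδ0 hδ2.le t ht hd
    have hbdd : BddAbove S := ⟨⌊C2 * δ ^ (-s)⌋₊, fun m hm => Nat.le_floor (hub m hm)⟩
    have hSne : S.Nonempty := ⟨0, ∅, by simp⟩
    have hmem : packingNum K δ ∈ S := Nat.sSup_mem hSne hbdd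
    refine ⟨hδ0, by linarith, ?_, hub _ hmem⟩
    obtain ⟨t, htc, htK, htd⟩ := hmem
    have hcov : K ⊆ ⋃ j ∈ t, ball (id j) (3 * δ) := by
      intro x hx
      by_contra hcon
      simp only [mem_iUnion, mem_ball, not_exists, not_lt, id] at hcon
      have hxt : x ∉ t := fun hxt => by
        have := hcon x hxt
        rw [dist_self] at this
        linarith
      have hdis : ∀ y ∈ t, Disjoint (closedBall x δ) (closedBall y δ) := fun y hy =>
        closedBall_disjoint_closedBall (by linarith [hcon y hy])
      have : (insert x t).card ∈ S := by
        refine ⟨insert x t, rfl, ?_, ?_⟩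
        · rw [Finset.coe_insert]
          exact insert_subset hx htK
        · rw [Finset.coe_insert]
          refine htd.insert fun y hy _ => ⟨hdis y hy, (hdis y hy).symm⟩
      have h2 : (insert x t).card ≤ packingNum K δ := le_csSup hbdd this
      rw [Finset.card_insert_of_notMem hxt] at h2
      omega
    have h3 := h t id (fun _ => 3 * δ) (fun j _ => ⟨by positivity, by linarith⟩) hcov
    rw [Finset.sum_const, htc, nsmul_eq_mul, Real.mul_rpow (by norm_num) hδ0.le] at h3
    rw [Real.rpow_neg hδ0.le, hC1, ← mul_inv, inv_le_iff_one_le_mul₀ (by positivity)]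
    linarith
  have hlog : Tendsto (fun δ : ℝ => -Real.log δ) (𝓝[>] (0 : ℝ)) atTop :=
    tendsto_neg_atBot_atTop.comp Real.tendsto_log_nhdsGT_zero
  have hlim : ∀ A : ℝ, Tendsto (fun δ : ℝ => A / (-Real.log δ) + s) (𝓝[>] (0 : ℝ)) (𝓝 s) := by
    intro A
    simpa using (hlog.const_div_atTop A).add_const s
  refine tendsto_of_tendsto_of_tendsto_of_le_of_le' (hlim (Real.log C1)) (hlim (Real.log C2)) ?_ ?_
  · filter_upwards [hbound] with δ ⟨hδ0, hδ1, hl, hu⟩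
    have hln : 0 < -Real.log δ := by linarith [Real.log_neg hδ0 hδ1]
    have hp : 0 < δ ^ (-s) := by positivity
    have := Real.log_le_log (by positivity) hl
    rw [Real.log_mul hC1p.ne' hp.ne', Real.log_rpow hδ0] at this
    rw [le_div_iff₀ hln, add_mul, div_mul_cancel₀ _ hln.ne']
    linarith
  · filter_upwards [hbound] with δ ⟨hδ0, hδ1, hl, hu⟩
    have hln : 0 < -Real.log δ := by linarith [Real.log_neg hδ0 hδ1]
    have hp : 0 < δ ^ (-s) := by positivity
    have := Real.log_le_log (lt_of_lt_of_le (by positivity) hl) hu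
    rw [Real.log_mul hC2p.ne' hp.ne', Real.log_rpow hδ0] at this
    rw [div_le_iff₀ hln, add_mul, div_mul_cancel₀ _ hln.ne']
    linarith

theorem crit {s : ℝ} (hs : 0 ≤ s) (H : ℝ → ℝ≥0∞) (h1 : ∀ t, s < t → H t = 0)
    (h2 : ∀ t, t ≤ s → H t ≠ 0) : sInf {t : ℝ | 0 ≤ t ∧ H t = 0} = s := by
  have : {t : ℝ | 0 ≤ t ∧ H t = 0} = Ioi s := by
    ext t
    simp only [mem_ofPred_eq, mem_Ioi]
    constructor
    · rintro ⟨-, h⟩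
      by_contra hcon
      exact h2 t (not_lt.1 hcon) h
    · intro h
      exact ⟨hs.trans h.le, h1 t h⟩
  rw [this, csInf_Ioi]

end Pack

/-- under the OSC, the box dimension, the fractal dimensions III–VI and the
Hausdorff dimension of the attractor all equal the Moran root `s`, and all the associated
measures of `K` are positive and finite. -/
theorem all_dims_eq {d k : ℕ}
    (f : Fin k → EuclideanSpace ℝ (Fin d) → EuclideanSpace ℝ (Fin d))
    (c : Fin k → ℝ) (hc : ∀ i, c i ∈ Set.Ioo (0 : ℝ) 1)
    (hf : ∀ i, IsSimilarity (f i) (c i)) (hosc : OSC f)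
    (K : Set (EuclideanSpace ℝ (Fin d))) (hne : K.Nonempty) (hcpt : IsCompact K)
    (hK : K = ⋃ i, f i '' K) (hdiam : 0 < Metric.diam K)
    (s : ℝ) (hs : 0 ≤ s) (hsum : ∑ i, c i ^ s = 1) :
    Filter.Tendsto (fun δ : ℝ => Real.log (packingNum K δ) / (-Real.log δ))
        (𝓝[>] (0 : ℝ)) (𝓝 s) ∧
      sInf {t : ℝ | 0 ≤ t ∧ H3 f K t = 0} = s ∧
      sInf {t : ℝ | 0 ≤ t ∧ H4 f K t = 0} = s ∧
      sInf {t : ℝ | 0 ≤ t ∧ H5 f K t = 0} = s ∧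
      sInf {t : ℝ | 0 ≤ t ∧ H6 f K t = 0} = s ∧
      dimH K = ENNReal.ofReal s ∧
      (0 < μH[s] K ∧ μH[s] K < ⊤) ∧
      (0 < H3 f K s ∧ H3 f K s < ⊤) ∧
      (0 < H4 f K s ∧ H4 f K s < ⊤) ∧
      (0 < H5 f K s ∧ H5 f K s < ⊤) ∧
      (0 < H6 f K s ∧ H6 f K s < ⊤) := by
  have hc0 : ∀ i, 0 < c i := fun i => (hc i).1
  have hc1 : ∀ i, c i < 1 := fun i => (hc i).2
  have hs0 : 0 < s := by
    rcases hs.eq_or_lt with rfl | h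
    · exfalso
      simp only [Real.rpow_zero, Finset.sum_const, Finset.card_univ, Fintype.card_fin,
        nsmul_eq_mul, mul_one, Nat.cast_eq_one] at hsum
      subst hsum
      have hK' : K = f 0 '' K := by
        refine hK.trans ?_
        refine subset_antisymm (iUnion_subset fun i => ?_) (subset_iUnion (fun i => f i '' K) 0)
        rw [Subsingleton.elim i 0]
      have h2 := (hf 0).diam_image (hc0 0) K
      rw [← hK'] at h2
      nlinarith [hc1 0]
    · exact h
  haveI : Nonempty (Fin k) := by
    by_contra hcon
    rw [not_nonempty_iff] at hcon
    simp at hsum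
  obtain ⟨i0, hi0⟩ := Finite.exists_min c
  obtain ⟨i1, hi1⟩ := Finite.exists_max c
  obtain ⟨C, hC, hmass⟩ := mass_dist hs (hc0 i0) hi0 (hc0 i1).le (hc1 i1) (hc1 i0) hi1 hf hsum hK
    hne hcpt hosc
  have hpos : 0 < μH[s] K := muH_pos_of_mass hne hcpt hs0 hC hmass
  have h6 : ∀ t, μH[t] K ≤ H6 f K t := muH_le_H6 hc0 hf hcpt
  have h5 : ∀ t, H6 f K t ≤ H5 f K t := H6_le_H5 (hc0 i1).le (hc1 i1) hi1 hc0 hf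
  have h4 : ∀ t, H5 f K t ≤ H4 f K t := H5_le_H4
  have h3 : ∀ t, H4 f K t ≤ H3 f K t := H4_le_H3 hK
  have hfin : H3 f K s < ⊤ := H3_lt_top hc0 hf hdiam hsum
  have hz : ∀ t, s < t → H3 f K t = 0 := fun t ht => H3_eq_zero hc0 hc1 hf hdiam hsum ht
  have hnz : ∀ t, t ≤ s → 0 < μH[t] K := fun t ht =>
    hpos.trans_le (Measure.hausdorffMeasure_mono ht K)
  have hz4 : ∀ t, s < t → H4 f K t = 0 := fun t ht => le_antisymm ((h3 t).trans (hz t ht).le) bot_le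
  have hz5 : ∀ t, s < t → H5 f K t = 0 := fun t ht => le_antisymm ((h4 t).trans (hz4 t ht).le) bot_le
  have hz6 : ∀ t, s < t → H6 f K t = 0 := fun t ht => le_antisymm ((h5 t).trans (hz5 t ht).le) bot_le
  have n6 : ∀ t, t ≤ s → 0 < H6 f K t := fun t ht => (hnz t ht).trans_le (h6 t)
  have n5 : ∀ t, t ≤ s → 0 < H5 f K t := fun t ht => (n6 t ht).trans_le (h5 t)
  have n4 : ∀ t, t ≤ s → 0 < H4 f K t := fun t ht => (n5 t ht).trans_le (h4 t)
  have n3 : ∀ t, t ≤ s → 0 < H3 f K t := fun t ht => (n4 t ht).trans_le (h3 t)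
  have f4 := (h3 s).trans_lt hfin
  have f5 := (h4 s).trans_lt f4
  have f6 := (h5 s).trans_lt f5
  have fH := (h6 s).trans_lt f6
  refine ⟨?_, crit hs _ hz fun t ht => (n3 t ht).ne', crit hs _ hz4 fun t ht => (n4 t ht).ne',
    crit hs _ hz5 fun t ht => (n5 t ht).ne', crit hs _ hz6 fun t ht => (n6 t ht).ne', ?_,
    ⟨hpos, fH⟩, ⟨n3 s le_rfl, hfin⟩, ⟨n4 s le_rfl, f4⟩, ⟨n5 s le_rfl, f5⟩, ⟨n6 s le_rfl, f6⟩⟩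
  · exact box_dim (hc0 i0) (hc1 i0) hi0 (hc0 i1).le (hc1 i1) hi1 hf hK hcpt hdiam hs0 hpos fH hC
      hmass
  · have hcoe : ((s.toNNReal : ℝ≥0) : ℝ) = s := Real.coe_toNNReal s hs
    have := dimH_of_hausdorffMeasure_ne_zero_ne_top (d := s.toNNReal) (s := K)
      (by rw [hcoe]; exact hpos.ne') (by rw [hcoe]; exact fH.ne)
    rw [this]; rfl
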